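/- For every s ∈ ℂ with −1 < Re(s) < 0, the function t ↦ e^{−st}·(1/2 − e^{t}) is Lebesgue integrable on (−∞,0), the improper integral lim_{R→∞} ∫_0^R e^{−st}·(1/2 − {e^t}) dt exists, and ζ(s)/s = lim_{R→∞} ∫_0^R e^{−st}·(1/2 − {e^t}) dt + ∫_{−∞}^0 e^{−st}·(1/2 − e^{t}) dt, where ζ is the Riemann zeta function and {x} = x − ⌊x⌋ denotes the fractional part. -/

import Mathlib

open MeasureTheory Filter intervalIntegral

/-!
For `1 < s.re`, Abel summation gives `ζ(s) = s ∫₁^∞ ⌊x⌋ x^(-s-1) dx`, and writing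
`⌊x⌋ = x - 1/2 + (1/2 - {x})` turns this into `ζ(s) = s/(s-1) - 1/2 + s S(s)` with
`S(s) = ∫₁^∞ (1/2 - {x}) x^(-s-1) dx`. Since `1/2 - {x}` has a bounded primitive, integration by
parts shows that `S` converges conditionally, and to a holomorphic function, for `-1 < s.re`; the
identity persists there by analytic continuation. Substituting `x = e^t` identifies `S(s)` with the
improper integral over `[0, ∞)`, while for `s.re < 0` the integral over `(-∞, 0)` is elementary and
equals `1/(s-1) - 1/(2s)`, exactly the remaining terms of `ζ(s)/s`.
-/

section CpowWeight

open Set Topology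

variable {E : Type*} [NormedAddCommGroup E] [NormedSpace ℂ E]

lemma integral_exp_mul_smul_comp_exp (f : ℝ → E) (a : ℂ) (p q : ℝ) :
    ∫ t in p..q, Complex.exp (a * t) • f (Real.exp t) =
      ∫ x in Real.exp p..Real.exp q, (x : ℂ) ^ (a - 1) • f x := by
  rw [← integral_deriv_smul_comp_of_deriv_nonneg Real.continuous_exp.continuousOn
    (fun t _ ↦ Real.hasDerivAt_exp t) (fun t _ ↦ (Real.exp_pos t).le)]
  congr! 2 with t
  have cpow_exp : (Real.exp t : ℂ) ^ (a - 1) = Complex.exp (a * t) / Real.exp t := by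
    rw [Complex.cpow_sub _ _ (mod_cast Real.exp_ne_zero t), Complex.cpow_one,
      Complex.cpow_def_of_ne_zero (mod_cast Real.exp_ne_zero t), ← Complex.ofReal_log
        (Real.exp_pos t).le, Real.log_exp, mul_comm]
  rw [Function.comp_apply, cpow_exp, ← Complex.coe_smul, smul_smul,
    mul_div_cancel₀ _ (mod_cast Real.exp_ne_zero t)]

variable {f F : ℝ → E} {a : ℂ} {p q C : ℝ}

lemma integrableOn_Ioi_cpow_smul_of_norm_le (hp : 0 < p)
    (hf : AEStronglyMeasurable f (volume.restrict (Ioi p))) (hC : ∀ x ∈ Ioi p, ‖f x‖ ≤ C)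
    (ha : a.re < -1) : IntegrableOn (fun x : ℝ ↦ (x : ℂ) ^ a • f x) (Ioi p) :=
  (integrableOn_Ioi_cpow_of_lt ha hp).smul_bdd C hf
    ((ae_restrict_iff' measurableSet_Ioi).2 (ae_of_all _ hC))

lemma differentiableAt_integral_Ioi_cpow_smul (hp : 0 < p)
    (hf : AEStronglyMeasurable f (volume.restrict (Ioi p))) (hC : ∀ x ∈ Ioi p, ‖f x‖ ≤ C)
    (ha : a.re < -1) :
    DifferentiableAt ℂ (fun z : ℂ ↦ ∫ x in Ioi p, (x : ℂ) ^ z • f x) a := by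
  set g : ℝ → E := (Ioi p).indicator f with hg
  have g_bound (x : ℝ) : ‖g x‖ ≤ max C 0 := by
    by_cases hx : x ∈ Ioi p
    · simpa [hg, hx] using Or.inl (hC x hx)
    · simp [hg, hx]
  have g_locallyIntegrable : LocallyIntegrable g :=
    (memLp_top_of_bound ((aestronglyMeasurable_indicator_iff measurableSet_Ioi).2 hf) _
      (ae_of_all _ g_bound)).locallyIntegrable le_top
  have g_isBigO_atTop : g =O[atTop] (· ^ (-(0 : ℝ)) : ℝ → ℝ) :=
    .of_bound (max C 0) (.of_forall fun x ↦ by simpa using g_bound x)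
  have g_isBigO_zero : g =O[𝓝[>] 0] (· ^ (-a.re) : ℝ → ℝ) := by
    refine .of_bound 1 ?_
    filter_upwards [mem_nhdsWithin_of_mem_nhds (Iio_mem_nhds hp)] with x hx
    rw [hg, indicator_of_notMem (notMem_Ioi.2 (le_of_lt hx)), norm_zero]
    positivity
  have integral_eq_mellin (z : ℂ) : ∫ x in Ioi p, (x : ℂ) ^ z • f x = mellin g (z + 1) := by
    simp_rw [mellin, add_sub_cancel_right, hg, ← indicator_smul]
    rw [setIntegral_indicator measurableSet_Ioi, Ioi_inter_Ioi, sup_eq_right.2 hp.le]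
  have mellin_differentiable : DifferentiableAt ℂ (mellin g) (a + 1) :=
    mellin_differentiableAt_of_isBigO_rpow (g_locallyIntegrable.locallyIntegrableOn _)
      g_isBigO_atTop (by simp; linarith) g_isBigO_zero (by simp)
  simp_rw [integral_eq_mellin]
  exact DifferentiableAt.comp (f := (· + 1)) a mellin_differentiable (by fun_prop)

lemma integral_cpow_smul_eq_sub_of_hasDeriv_right [CompleteSpace E] (hp : 0 < p) (hq : 0 < q)
    (hF : ContinuousOn F (uIcc p q))
    (hFf : ∀ x ∈ Ioo (min p q) (max p q), HasDerivWithinAt F (f x) (Ioi x) x)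
    (hf : IntervalIntegrable f volume p q) (a : ℂ) :
    ∫ x in p..q, (x : ℂ) ^ a • f x =
      (q : ℂ) ^ a • F q - (p : ℂ) ^ a • F p - a • ∫ x in p..q, (x : ℂ) ^ (a - 1) • F x := by
  have pos {x : ℝ} (hx : x ∈ uIcc p q) : 0 < x := (lt_min hp hq).trans_le hx.1
  have cpow_continuousOn (b : ℂ) : ContinuousOn (fun x : ℝ ↦ (x : ℂ) ^ b) (uIcc p q) := fun x hx ↦
    (Complex.continuousAt_ofReal_cpow_const _ _ (Or.inr (pos hx).ne')).continuousWithinAt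
  have cpow_hasDerivAt {x : ℝ} (hx : 0 < x) :
      HasDerivAt (fun y : ℝ ↦ (y : ℂ) ^ a) (a * (x : ℂ) ^ (a - 1)) x := by
    simpa using ((hasDerivAt_id (x : ℂ)).cpow_const (c := a)
      (Complex.ofReal_mem_slitPlane.2 hx)).comp_ofReal
  rw [integral_smul_deriv_eq_deriv_smul_of_hasDeriv_right (cpow_continuousOn a) hF
    (fun x hx ↦ (cpow_hasDerivAt (pos (Ioo_subset_Icc_self hx))).hasDerivWithinAt) hFf
    ((cpow_continuousOn (a - 1)).intervalIntegrable.const_mul a) hf]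
  simp only [mul_smul, intervalIntegral.integral_smul]

lemma tendsto_cpow_smul_atTop_zero (hC : ∀ᶠ x in atTop, ‖F x‖ ≤ C) (ha : a.re < 0) :
    Tendsto (fun x : ℝ ↦ (x : ℂ) ^ a • F x) atTop (𝓝 0) := by
  refine NormedField.tendsto_zero_smul_of_tendsto_zero_of_bounded ?_
    (isBoundedUnder_of_eventually_le hC)
  rw [tendsto_zero_iff_norm_tendsto_zero]
  refine (tendsto_rpow_neg_atTop (neg_pos.2 ha)).congr' ?_
  filter_upwards [eventually_gt_atTop 0] with x hx
  rw [Complex.norm_cpow_eq_rpow_re_of_pos hx, neg_neg]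

/- Dirichlet's test: integrating by parts against a bounded primitive gains one power of `x`, so the
limit exists down to `a.re < 0` although the integral need not converge absolutely. -/
lemma tendsto_integral_cpow_smul_of_hasDeriv_right [CompleteSpace E] (hp : 0 < p)
    (hF : ContinuousOn F (Ici p)) (hFf : ∀ x ∈ Ioi p, HasDerivWithinAt F (f x) (Ioi x) x)
    (hf : LocallyIntegrableOn f (Ici p)) (hC : ∀ x ∈ Ioi p, ‖F x‖ ≤ C) (ha : a.re < 0) :
    Tendsto (fun X : ℝ ↦ ∫ x in p..X, (x : ℂ) ^ a • f x) atTop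
      (𝓝 (-((p : ℂ) ^ a • F p) - a • ∫ x in Ioi p, (x : ℂ) ^ (a - 1) • F x)) := by
  have boundary : Tendsto (fun X : ℝ ↦ (X : ℂ) ^ a • F X) atTop (𝓝 0) :=
    tendsto_cpow_smul_atTop_zero ((eventually_gt_atTop p).mono hC) ha
  have integrable : IntegrableOn (fun x : ℝ ↦ (x : ℂ) ^ (a - 1) • F x) (Ioi p) :=
    integrableOn_Ioi_cpow_smul_of_norm_le hp
      ((hF.mono Ioi_subset_Ici_self).aestronglyMeasurable measurableSet_Ioi) hC (by simp; linarith)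
  have limit := (boundary.sub_const ((p : ℂ) ^ a • F p)).sub
    ((intervalIntegral_tendsto_integral_Ioi p integrable tendsto_id).const_smul a)
  rw [zero_sub] at limit
  refine limit.congr' ?_
  filter_upwards [eventually_ge_atTop p] with X hX
  have uIcc_subset : uIcc p X ⊆ Ici p := by
    rw [uIcc_of_le hX]
    exact Icc_subset_Ici_self
  refine (integral_cpow_smul_eq_sub_of_hasDeriv_right hp (hp.trans_le hX) (hF.mono uIcc_subset)
    (fun x hx ↦ hFf x ?_) ?_ a).symm
  · exact (min_eq_left hX).symm.trans_lt hx.1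
  · exact (hf.integrableOn_compact_subset uIcc_subset isCompact_uIcc).intervalIntegrable

end CpowWeight

section HalfLineExp

variable {a : ℂ}

lemma exp_mul_mul_sub_exp (a c : ℂ) (t : ℝ) :
    Complex.exp (a * t) * (c - Real.exp t) =
      c * Complex.exp (a * t) - Complex.exp ((a + 1) * t) := by
  rw [add_one_mul, Complex.exp_add, Complex.ofReal_exp]
  ring

lemma integrableOn_exp_mul_mul_sub_exp (ha : 0 < a.re) (c : ℂ) :
    IntegrableOn (fun t : ℝ ↦ Complex.exp (a * t) * (c - Real.exp t)) (Set.Iio 0) := by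
  have ha' : 0 < (a + 1).re := by simp; linarith
  simp_rw [exp_mul_mul_sub_exp]
  exact IntegrableOn.mono_set (((integrableOn_exp_mul_complex_Iic ha 0).const_mul c).sub
    (integrableOn_exp_mul_complex_Iic ha' 0)) Set.Iio_subset_Iic_self

lemma integral_Iio_exp_mul_mul_sub_exp (ha : 0 < a.re) (c : ℂ) :
    ∫ t in Set.Iio (0 : ℝ), Complex.exp (a * t) * (c - Real.exp t) = c / a - 1 / (a + 1) := by
  have ha' : 0 < (a + 1).re := by simp; linarith
  simp_rw [exp_mul_mul_sub_exp]
  rw [← integral_Iic_eq_integral_Iio,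
    MeasureTheory.integral_sub ((integrableOn_exp_mul_complex_Iic ha 0).const_mul c)
      (integrableOn_exp_mul_complex_Iic ha' 0),
    MeasureTheory.integral_const_mul, integral_exp_mul_complex_Iic ha,
    integral_exp_mul_complex_Iic ha']
  simp [div_eq_mul_inv]

end HalfLineExp

section Sawtooth

/-- The sawtooth `1/2 - {x}`, i.e. minus the first periodized Bernoulli function, valued `1/2`
at the integers. -/
noncomputable def sawtooth (x : ℝ) : ℝ := 1 / 2 - Int.fract x

/-- The primitive of `sawtooth` vanishing at the integers. -/
noncomputable def sawtoothPrimitive (x : ℝ) : ℝ := Int.fract x * (1 - Int.fract x) / 2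

lemma measurable_sawtooth : Measurable sawtooth := measurable_const.sub measurable_fract

lemma abs_sawtooth_le (x : ℝ) : |sawtooth x| ≤ 1 / 2 := by
  rw [sawtooth, abs_le]
  constructor <;> linarith [Int.fract_nonneg x, Int.fract_lt_one x]

lemma locallyIntegrable_sawtooth : LocallyIntegrable fun x ↦ (sawtooth x : ℂ) :=
  (memLp_top_of_bound (Complex.measurable_ofReal.comp measurable_sawtooth).aestronglyMeasurable
    (1 / 2) (ae_of_all _ fun x ↦ (Complex.norm_real _).trans_le (abs_sawtooth_le x))
    ).locallyIntegrable le_top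

lemma natCast_floor_eq_add_sawtooth {x : ℝ} (hx : 0 ≤ x) : (⌊x⌋₊ : ℝ) = x - 1 / 2 + sawtooth x := by
  rw [natCast_floor_eq_intCast_floor hx, sawtooth, ← Int.self_sub_fract]
  ring

lemma continuous_sawtoothPrimitive : Continuous sawtoothPrimitive :=
  ContinuousOn.comp_fract'' (f := fun u : ℝ ↦ u * (1 - u) / 2) (by fun_prop) (by simp)

lemma abs_sawtoothPrimitive_le (x : ℝ) : |sawtoothPrimitive x| ≤ 1 / 8 := by
  rw [sawtoothPrimitive, abs_le]
  constructor <;>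
    nlinarith [Int.fract_nonneg x, Int.fract_lt_one x, sq_nonneg (Int.fract x - 1 / 2)]

lemma sawtoothPrimitive_intCast (n : ℤ) : sawtoothPrimitive n = 0 := by
  simp [sawtoothPrimitive]

lemma hasDerivWithinAt_sawtoothPrimitive (x : ℝ) :
    HasDerivWithinAt sawtoothPrimitive (sawtooth x) (Set.Ioi x) x := by
  have local_formula : HasDerivAt (fun y : ℝ ↦ (y - ⌊x⌋) * (1 - (y - ⌊x⌋)) / 2) (sawtooth x) x := by
    have shift : HasDerivAt (fun y : ℝ ↦ y - ⌊x⌋) 1 x := (hasDerivAt_id x).sub_const _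
    refine ((shift.mul (shift.const_sub 1)).div_const 2).congr_deriv ?_
    rw [sawtooth, ← Int.self_sub_floor]
    ring
  refine local_formula.hasDerivWithinAt.congr_of_eventuallyEq ?_ rfl
  filter_upwards [nhdsWithin_mono x Set.Ioi_subset_Ici_self
    (tendsto_pure.1 (tendsto_floor_right_pure_floor x))] with y hy
  rw [sawtoothPrimitive, ← Int.self_sub_floor, hy]

end Sawtooth

section SawtoothIntegral

open Set Topology

/-- The conditionally convergent integral `∫ x in 1..∞, x ^ (-s - 1) * (1/2 - {x})`, written after
one integration by parts so that it converges absolutely for all `-1 < s.re`. -/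
noncomputable def sawtoothIntegral (s : ℂ) : ℂ :=
  (s + 1) * ∫ x in Ioi (1 : ℝ), (x : ℂ) ^ (-s - 2) * sawtoothPrimitive x

variable {s : ℂ}

lemma tendsto_integral_cpow_mul_sawtooth (hs : -1 < s.re) :
    Tendsto (fun X : ℝ ↦ ∫ x in (1 : ℝ)..X, (x : ℂ) ^ (-s - 1) * sawtooth x) atTop
      (𝓝 (sawtoothIntegral s)) := by
  have limit := tendsto_integral_cpow_smul_of_hasDeriv_right (a := -s - 1) one_pos
    (Complex.continuous_ofReal.comp continuous_sawtoothPrimitive).continuousOn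
    (fun x _ ↦ (hasDerivWithinAt_sawtoothPrimitive x).ofReal_comp)
    (locallyIntegrable_sawtooth.locallyIntegrableOn _)
    (fun x _ ↦ (Complex.norm_real _).trans_le (abs_sawtoothPrimitive_le x)) (by simp; linarith)
  have primitive_one : sawtoothPrimitive 1 = 0 := mod_cast sawtoothPrimitive_intCast 1
  rw [sawtoothIntegral]
  simpa only [smul_eq_mul, Function.comp_apply, primitive_one, Complex.ofReal_zero, mul_zero,
    neg_zero, zero_sub, ← neg_mul, neg_sub', neg_neg, sub_neg_eq_add, sub_sub,
    one_add_one_eq_two] using limit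

lemma integrableOn_cpow_mul_sawtooth (hs : 0 < s.re) :
    IntegrableOn (fun x : ℝ ↦ (x : ℂ) ^ (-s - 1) * sawtooth x) (Ioi 1) :=
  integrableOn_Ioi_cpow_smul_of_norm_le one_pos
    (Complex.measurable_ofReal.comp measurable_sawtooth).aestronglyMeasurable
    (fun x _ ↦ (Complex.norm_real _).trans_le (abs_sawtooth_le x)) (by simp; linarith)

lemma integral_cpow_mul_sawtooth (hs : 0 < s.re) :
    ∫ x in Ioi (1 : ℝ), (x : ℂ) ^ (-s - 1) * sawtooth x = sawtoothIntegral s :=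
  tendsto_nhds_unique
    (intervalIntegral_tendsto_integral_Ioi 1 (integrableOn_cpow_mul_sawtooth hs) tendsto_id)
    (tendsto_integral_cpow_mul_sawtooth (by linarith))

lemma differentiableAt_sawtoothIntegral (hs : -1 < s.re) :
    DifferentiableAt ℂ sawtoothIntegral s := by
  have inner : DifferentiableAt ℂ
      (fun z : ℂ ↦ ∫ x in Ioi (1 : ℝ), (x : ℂ) ^ z • (sawtoothPrimitive x : ℂ)) (-s - 2) :=
    differentiableAt_integral_Ioi_cpow_smul one_pos
      (Complex.continuous_ofReal.comp continuous_sawtoothPrimitive).aestronglyMeasurable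
      (fun x _ ↦ (Complex.norm_real _).trans_le (abs_sawtoothPrimitive_le x)) (by simp; linarith)
  exact (differentiableAt_id.add_const 1).mul
    (DifferentiableAt.comp (f := fun z ↦ -z - 2) s inner (by fun_prop))

end SawtoothIntegral

section Zeta

open Set

variable {s : ℂ}

lemma riemannZeta_eq_mul_integral_floor (hs : 1 < s.re) :
    riemannZeta s = s * ∫ x in Ioi (1 : ℝ), (x : ℂ) ^ (-s - 1) * ⌊x⌋₊ := by
  rw [← LSeries_one_eq_riemannZeta hs, LSeries_eq_mul_integral' 1 zero_le_one hs
    (by simpa using Asymptotics.isBigO_refl (fun n : ℕ ↦ (n : ℝ)) atTop)]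
  simp only [Pi.one_apply, Finset.sum_const, Nat.card_Icc, add_tsub_cancel_right, nsmul_eq_mul,
    mul_one, mul_comm, neg_add']

lemma cpow_mul_floor_eq (s : ℂ) {x : ℝ} (hx : 0 < x) : (x : ℂ) ^ (-s - 1) * ⌊x⌋₊ =
    (x : ℂ) ^ (-s) - 1 / 2 * (x : ℂ) ^ (-s - 1) + (x : ℂ) ^ (-s - 1) * sawtooth x := by
  have hx₀ : (x : ℂ) ≠ 0 := mod_cast hx.ne'
  rw [← Complex.ofReal_natCast, natCast_floor_eq_add_sawtooth hx.le, Complex.cpow_sub _ _ hx₀,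
    Complex.cpow_one]
  push_cast
  field_simp

lemma riemannZeta_eq_sawtoothIntegral_of_one_lt_re (hs : 1 < s.re) :
    riemannZeta s = s / (s - 1) - 1 / 2 + s * sawtoothIntegral s := by
  have hs₀ : s ≠ 0 := Complex.ne_zero_of_re_pos (one_pos.trans hs)
  have re_lt : (-s).re < -1 := by simpa using hs
  have re_sub_one_lt : (-s - 1).re < -1 := by simp; linarith
  have integrable_cpow := integrableOn_Ioi_cpow_of_lt re_lt one_pos
  have integrable_half := (integrableOn_Ioi_cpow_of_lt re_sub_one_lt one_pos).const_mul (1 / 2)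
  have integrable_sub : IntegrableOn
      (fun x : ℝ ↦ (x : ℂ) ^ (-s) - 1 / 2 * (x : ℂ) ^ (-s - 1)) (Ioi 1) :=
    integrable_cpow.sub integrable_half
  have integral_cpow : ∫ x in Ioi (1 : ℝ), (x : ℂ) ^ (-s) = 1 / (s - 1) := by
    rw [integral_Ioi_cpow_of_lt re_lt one_pos, Complex.ofReal_one, Complex.one_cpow,
      neg_div, ← div_neg, neg_add', neg_neg]
  have integral_half : ∫ x in Ioi (1 : ℝ), 1 / 2 * (x : ℂ) ^ (-s - 1) = 1 / (2 * s) := by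
    rw [MeasureTheory.integral_const_mul, integral_Ioi_cpow_of_lt re_sub_one_lt one_pos,
      Complex.ofReal_one, Complex.one_cpow, sub_add_cancel, neg_div_neg_eq, one_div_mul_one_div]
  rw [riemannZeta_eq_mul_integral_floor hs, setIntegral_congr_fun measurableSet_Ioi
      (fun x hx ↦ cpow_mul_floor_eq s (one_pos.trans hx)),
    MeasureTheory.integral_add integrable_sub (integrableOn_cpow_mul_sawtooth (by linarith)),
    MeasureTheory.integral_sub integrable_cpow integrable_half, integral_cpow, integral_half,
    integral_cpow_mul_sawtooth (by linarith)]
  field_simp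

lemma riemannZeta_eq_sawtoothIntegral (hs : -1 < s.re) (hs₁ : s ≠ 1) :
    riemannZeta s = s / (s - 1) - 1 / 2 + s * sawtoothIntegral s := by
  have isOpen_re_gt (b : ℝ) : IsOpen {z : ℂ | b < z.re} :=
    isOpen_lt continuous_const Complex.continuous_re
  have riemannZeta₁_eqOn : EqOn riemannZeta₁
      (fun z ↦ z - (z - 1) / 2 + (z - 1) * z * sawtoothIntegral z) {z : ℂ | -1 < z.re} := by
    refine AnalyticOnNhd.eqOn_of_preconnected_of_eventuallyEq (z₀ := 2)
      (differentiable_riemannZeta₁.differentiableOn.analyticOnNhd (isOpen_re_gt _))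
      (DifferentiableOn.analyticOnNhd (fun z hz ↦ ?_) (isOpen_re_gt _))
      (convex_halfSpace_re_gt _).isPreconnected (by simp; norm_num) ?_
    · have := differentiableAt_sawtoothIntegral hz
      exact DifferentiableAt.differentiableWithinAt (by fun_prop)
    · filter_upwards [(isOpen_re_gt 1).mem_nhds (by simp : 1 < (2 : ℂ).re)] with z (hz : 1 < z.re)
      have hz₁ : z - 1 ≠ 0 := Complex.ne_zero_of_re_pos (by simpa using hz)
      have zeta_formula := riemannZeta_eq_sawtoothIntegral_of_one_lt_re hz
      rw [riemannZeta_eq_inv_sub_mul (sub_ne_zero.1 hz₁), inv_mul_eq_iff_eq_mul₀ hz₁]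
        at zeta_formula
      rw [zeta_formula]
      field_simp
  have hs₁' : s - 1 ≠ 0 := sub_ne_zero.2 hs₁
  rw [riemannZeta_eq_inv_sub_mul hs₁, riemannZeta₁_eqOn hs]
  field_simp

end Zeta

theorem statement9 (s : ℂ) (h0 : -1 < s.re) (h1 : s.re < 0) :
    MeasureTheory.IntegrableOn
      (fun t : ℝ => Complex.exp (-s * t) * ((1/2 : ℂ) - (Real.exp t : ℂ))) (Set.Iio 0) ∧
    ∃ L : ℂ,
      Filter.Tendsto
        (fun R : ℝ => ∫ t in (0:ℝ)..R,
          Complex.exp (-s * t) * ((1/2 : ℂ) - ((Int.fract (Real.exp t) : ℝ) : ℂ)))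
        Filter.atTop (nhds L) ∧
      riemannZeta s / s =
        L + ∫ t in Set.Iio (0:ℝ),
          Complex.exp (-s * t) * ((1/2 : ℂ) - (Real.exp t : ℂ)) := by
  have hs : 0 < (-s).re := by simpa using h1
  have hs₀ : s ≠ 0 := fun h ↦ by simp [h] at h1
  have hs₁ : s ≠ 1 := fun h ↦ by norm_num [h] at h1
  refine ⟨integrableOn_exp_mul_mul_sub_exp hs _, sawtoothIntegral s, ?_, ?_⟩
  · refine ((tendsto_integral_cpow_mul_sawtooth h0).comp Real.tendsto_exp_atTop).congr fun R ↦ ?_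
    simpa [sawtooth] using (integral_exp_mul_smul_comp_exp (fun x ↦ (sawtooth x : ℂ)) (-s) 0 R).symm
  · have hs₁' : s - 1 ≠ 0 := sub_ne_zero.2 hs₁
    rw [riemannZeta_eq_sawtoothIntegral h0 hs₁, integral_Iio_exp_mul_mul_sub_exp hs,
      neg_add_eq_sub, ← neg_sub s 1]
    field_simp
    ring
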